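/- Let m ≥ 1 be an integer and λ > 0 a real. Let T and E be independent real random variables, where T has the Gamma distribution with shape m and scale λ, and E is exponentially distributed with rate 1. Then the law of the product T·E is absolutely continuous with density g ↦ (2/(m−1)!)·λ^{−(m+1)/2}·g^{(m−1)/2}·K(m−1, 2·√(g/λ)) for g > 0 (and 0 for g ≤ 0). -/

import Mathlib

/-!
Write `K_ν(x) = ∫₀^∞ exp(-x cosh u) cosh(ν u) du`. Conditioning on the first factor expresses the
density at `g > 0` of a product of independent `Gamma(a, r)` and `Gamma(b, s)` variables (shape,
rate) as a multiple of `∫₀^∞ t^(a-b-1) exp(-(r t + s g / t)) dt`. The substitution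
`t = √(s g / r) e^u` makes the exponent equal to `-2 √(r s g) cosh u`, and folding the integral at
`u = 0` leaves `2 (s g / r)^((a-b)/2) K_{a-b}(2 √(r s g))`. The exponential law is `Gamma(1, 1)`.
-/

open MeasureTheory Real Set ProbabilityTheory

/-- Modified Bessel function of the second kind of integer order, via its
integral representation `K(ν, x) = ∫₀^∞ exp(−x·cosh t)·cosh(ν·t) dt`. -/
noncomputable def besselK (ν : ℕ) (x : ℝ) : ℝ :=
  ∫ t in Set.Ioi (0 : ℝ), Real.exp (-(x * Real.cosh t)) * Real.cosh ((ν : ℝ) * t)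

/-- The Gamma distribution with (positive integer) shape `m` and scale `lam`, i.e. the
measure on `ℝ` with density `t^{m−1}·exp(−t/λ)/(λ^m·(m−1)!)` for `t ≥ 0`. -/
noncomputable def gammaScaleMeasure (m : ℕ) (lam : ℝ) : Measure ℝ :=
  volume.withDensity fun t =>
    ENNReal.ofReal (if 0 ≤ t then t ^ (m - 1) * Real.exp (-t / lam) /
      (lam ^ m * (Nat.factorial (m - 1) : ℝ)) else 0)

/-- The exponential distribution with rate `r`, i.e. the measure on `ℝ` with density
`r·exp(−r·t)` for `t ≥ 0`. -/
noncomputable def expDist (r : ℝ) : Measure ℝ :=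
  volume.withDensity fun t => ENNReal.ofReal (if 0 ≤ t then r * Real.exp (-(r * t)) else 0)

open scoped ENNReal

section ChangeOfVariables

variable {F : Type*} [NormedAddCommGroup F] [NormedSpace ℝ F]

lemma integral_exp_smul_comp_exp (f : ℝ → F) :
    ∫ u, exp u • f (exp u) = ∫ t in Ioi 0, f t := by
  rw [← range_exp, ← image_univ, integral_image_eq_integral_abs_deriv_smul MeasurableSet.univ
    (fun u _ ↦ (hasDerivAt_exp u).hasDerivWithinAt) exp_injective.injOn]
  simp only [abs_exp, Measure.restrict_univ]

lemma integrable_exp_smul_comp_exp_iff (f : ℝ → F) :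
    Integrable (fun u ↦ exp u • f (exp u)) ↔ IntegrableOn f (Ioi 0) := by
  rw [← range_exp, ← image_univ, integrableOn_image_iff_integrableOn_abs_deriv_smul
    MeasurableSet.univ (fun u _ ↦ (hasDerivAt_exp u).hasDerivWithinAt) exp_injective.injOn]
  simp only [abs_exp, integrableOn_univ]

lemma integral_eq_integral_Ioi_add_comp_neg {f : ℝ → F} (hf : Integrable f) :
    ∫ u, f u = ∫ u in Ioi 0, (f u + f (-u)) := by
  rw [integral_add hf.integrableOn hf.comp_neg.integrableOn, integral_comp_neg_Ioi, neg_zero,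
    add_comm, intervalIntegral.integral_Iic_add_Ioi hf.integrableOn hf.integrableOn]

lemma lintegral_comp_mul_left_of_ne_zero (f : ℝ → ℝ≥0∞) {c : ℝ} (hc : c ≠ 0) :
    ∫⁻ x, f (c * x) = ENNReal.ofReal |c⁻¹| * ∫⁻ x, f x := by
  rw [← (measurableEmbedding_mulLeft₀ hc).lintegral_map, map_volume_mul_left hc,
    lintegral_smul_measure, smul_eq_mul]

end ChangeOfVariables

/-- The modified Bessel function of the second kind of real order `ν`, which extends `besselK`; the
integral converges for `0 < x`. -/
noncomputable def besselKReal (ν x : ℝ) : ℝ :=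
  ∫ t in Ioi (0 : ℝ), exp (-(x * cosh t)) * cosh (ν * t)

lemma besselKReal_natCast (n : ℕ) (x : ℝ) : besselKReal n x = besselK n x := rfl

lemma one_add_sq_div_two_le_cosh (u : ℝ) : 1 + u ^ 2 / 2 ≤ cosh u := by
  have h := sum_le_hasSum (Finset.range 2)
    (fun k _ ↦ div_nonneg ((even_two_mul k).pow_nonneg u) (Nat.cast_nonneg _)) (hasSum_cosh u)
  simpa [Finset.sum_range_succ] using h

lemma integrable_exp_neg_mul_sq_add_mul {c : ℝ} (hc : 0 < c) (ν : ℝ) :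
    Integrable fun u : ℝ ↦ exp (-c * u ^ 2 + ν * u) := by
  refine (((integrable_exp_neg_mul_sq hc).comp_sub_right (ν / (2 * c))).const_mul
    (exp (ν ^ 2 / (4 * c)))).congr (ae_of_all _ fun u ↦ ?_)
  simp only [← exp_add]
  congr 1
  field_simp
  ring

lemma integrable_exp_neg_mul_cosh_mul_exp {x : ℝ} (hx : 0 < x) (ν : ℝ) :
    Integrable fun u ↦ exp (-(x * cosh u)) * exp (ν * u) := by
  refine (integrable_exp_neg_mul_sq_add_mul (half_pos hx) ν).mono' (by fun_prop)
    (ae_of_all _ fun u ↦ ?_)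
  rw [← exp_add, norm_of_nonneg (exp_nonneg _)]
  gcongr
  nlinarith [mul_le_mul_of_nonneg_left (one_add_sq_div_two_le_cosh u) hx.le]

lemma integral_exp_neg_mul_cosh_mul_exp {x : ℝ} (hx : 0 < x) (ν : ℝ) :
    ∫ u, exp (-(x * cosh u)) * exp (ν * u) = 2 * besselKReal ν x := by
  rw [integral_eq_integral_Ioi_add_comp_neg (integrable_exp_neg_mul_cosh_mul_exp hx ν),
    besselKReal, ← integral_const_mul]
  congr 1 with u
  rw [cosh_neg, cosh_eq (ν * u), mul_neg]
  ring

section LaplaceIntegral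

variable {p q : ℝ}

/- The scale `√(q / p)` balances the two terms of `p t + q / t`. -/
lemma exp_smul_rpow_mul_exp_neg_balanced (hp : 0 < p) (hq : 0 < q) (ν u : ℝ) :
    exp u • ((√(q / p) * exp u) ^ (ν - 1) *
        exp (-(p * (√(q / p) * exp u) + q / (√(q / p) * exp u)))) =
      (q / p) ^ ((ν - 1) / 2) * (exp (-(2 * √(p * q) * cosh u)) * exp (ν * u)) := by
  have hqp : √(q / p) ^ (ν - 1) = (q / p) ^ ((ν - 1) / 2) := by
    rw [sqrt_eq_rpow, ← rpow_mul (by positivity)]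
    ring_nf
  have hp_scale : p * √(q / p) = √(p * q) := by
    rw [sqrt_div hq.le, sqrt_mul hp.le, mul_div_left_comm, div_sqrt, mul_comm]
  have hq_scale : q / √(q / p) = √(p * q) := by
    rw [sqrt_div hq.le, sqrt_mul hp.le, div_div_eq_mul_div, mul_div_right_comm, div_sqrt, mul_comm]
  have exponent : p * (√(q / p) * exp u) + q / (√(q / p) * exp u) = 2 * √(p * q) * cosh u := by
    rw [← mul_assoc, ← div_div, hp_scale, hq_scale, cosh_eq, exp_neg]
    ring
  have power : exp u * exp u ^ (ν - 1) = exp (ν * u) := by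
    rw [← exp_mul, ← exp_add]
    ring_nf
  rw [exponent, mul_rpow (by positivity) (exp_nonneg u), hqp, smul_eq_mul, ← power]
  ring

lemma integrableOn_rpow_mul_exp_neg_mul_add_div (hp : 0 < p) (hq : 0 < q) (ν : ℝ) :
    IntegrableOn (fun t ↦ t ^ (ν - 1) * exp (-(p * t + q / t))) (Ioi 0) := by
  have hc : 0 < √(q / p) := by positivity
  rw [← mul_zero √(q / p), ← integrableOn_Ioi_comp_mul_left_iff _ _ hc,
    ← integrable_exp_smul_comp_exp_iff]
  simp only [exp_smul_rpow_mul_exp_neg_balanced hp hq]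
  exact (integrable_exp_neg_mul_cosh_mul_exp (by positivity) ν).const_mul _

lemma integral_rpow_mul_exp_neg_mul_add_div (hp : 0 < p) (hq : 0 < q) (ν : ℝ) :
    ∫ t in Ioi 0, t ^ (ν - 1) * exp (-(p * t + q / t)) =
      2 * (q / p) ^ (ν / 2) * besselKReal ν (2 * √(p * q)) := by
  have hc : 0 < √(q / p) := by positivity
  rw [← mul_zero √(q / p), ← integral_comp_mul_left_Ioi' _ _ hc, ← integral_exp_smul_comp_exp]
  simp only [exp_smul_rpow_mul_exp_neg_balanced hp hq]
  rw [integral_const_mul, integral_exp_neg_mul_cosh_mul_exp (by positivity), smul_eq_mul,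
    sqrt_eq_rpow, ← mul_assoc, ← rpow_add (by positivity)]
  ring_nf

end LaplaceIntegral

lemma mconv_withDensity_volume {μ : Measure ℝ} [SFinite μ] (hμ : ∀ᵐ t ∂μ, t ≠ 0)
    {f : ℝ → ℝ≥0∞} (hf : Measurable f) :
    μ ∗ₘ volume.withDensity f =
      volume.withDensity fun g ↦ ∫⁻ t, ENNReal.ofReal |t⁻¹| * f (t⁻¹ * g) ∂μ := by
  refine Measure.ext_of_lintegral _ fun φ hφ ↦ ?_
  have rescale : ∀ t : ℝ, t ≠ 0 → ∫⁻ y, φ (t * y) ∂volume.withDensity f =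
      ∫⁻ g, ENNReal.ofReal |t⁻¹| * f (t⁻¹ * g) * φ g := by
    intro t ht
    have h := lintegral_comp_mul_left_of_ne_zero (fun g ↦ f (t⁻¹ * g) * φ g) ht
    simp only [inv_mul_cancel_left₀ ht] at h
    rw [lintegral_withDensity_eq_lintegral_mul _ hf (by fun_prop)]
    simp only [Pi.mul_apply, h, mul_assoc]
    rw [lintegral_const_mul _ (by fun_prop)]
  calc ∫⁻ z, φ z ∂(μ ∗ₘ volume.withDensity f)
      = ∫⁻ t, ∫⁻ g, ENNReal.ofReal |t⁻¹| * f (t⁻¹ * g) * φ g ∂volume ∂μ := by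
        rw [Measure.lintegral_mconv hφ]
        exact lintegral_congr_ae (hμ.mono rescale)
    _ = ∫⁻ g, ∫⁻ t, ENNReal.ofReal |t⁻¹| * f (t⁻¹ * g) * φ g ∂μ ∂volume :=
        lintegral_lintegral_swap (by fun_prop)
    _ = ∫⁻ g, φ g ∂volume.withDensity
          fun g ↦ ∫⁻ t, ENNReal.ofReal |t⁻¹| * f (t⁻¹ * g) ∂μ := by
        rw [lintegral_withDensity_eq_lintegral_mul _ (by fun_prop) hφ]
        refine lintegral_congr fun g ↦ ?_
        rw [Pi.mul_apply, lintegral_mul_const _ (by fun_prop)]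

/-- The density of the product of two independent gamma variables with shapes `a`, `b` and rates
`r`, `s` (the generalized K-distribution). -/
noncomputable def gammaProductPDFReal (a b r s g : ℝ) : ℝ :=
  if 0 < g then
    2 * (r * s) ^ ((a + b) / 2) / (Gamma a * Gamma b) * g ^ ((a + b) / 2 - 1) *
      besselKReal (a - b) (2 * √(r * s * g))
  else 0

@[fun_prop]
lemma measurable_gammaPDF (a r : ℝ) : Measurable (gammaPDF a r) :=
  (measurable_gammaPDFReal a r).ennreal_ofReal

section GammaProduct

variable {a b r s g t : ℝ}

lemma gammaPDF_mul_abs_inv_mul_gammaPDF_of_pos (ha : 0 < a) (hr : 0 < r) (hg : 0 < g)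
    (ht : 0 < t) :
    gammaPDF a r t * (ENNReal.ofReal |t⁻¹| * gammaPDF b s (t⁻¹ * g)) =
      ENNReal.ofReal (r ^ a * s ^ b / (Gamma a * Gamma b) * g ^ (b - 1) *
        (t ^ (a - b - 1) * exp (-(r * t + s * g / t)))) := by
  have : 0 < Gamma a := Gamma_pos_of_pos ha
  have power : t ^ (a - 1) * t⁻¹ * t⁻¹ ^ (b - 1) = t ^ (a - b - 1) := by
    rw [← rpow_neg_one t, ← rpow_mul ht.le, ← rpow_add ht, ← rpow_add ht]
    ring_nf
  have exponential : exp (-(r * t)) * exp (-(s * (t⁻¹ * g))) = exp (-(r * t + s * g / t)) := by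
    rw [← exp_add]
    ring_nf
  rw [gammaPDF_of_nonneg ht.le, gammaPDF_of_nonneg (by positivity), abs_of_pos (inv_pos.2 ht),
    ← ENNReal.ofReal_mul (by positivity), ← ENNReal.ofReal_mul (by positivity),
    mul_rpow (by positivity) hg.le, ← power, ← exponential]
  ring_nf

lemma gammaPDF_mul_abs_inv_mul_gammaPDF_of_nonpos (ht : t ≤ 0) :
    gammaPDF a r t * (ENNReal.ofReal |t⁻¹| * gammaPDF b s (t⁻¹ * g)) = 0 := by
  rcases ht.lt_or_eq with ht | rfl
  · rw [gammaPDF_of_neg ht, zero_mul]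
  · simp only [inv_zero, abs_zero, ENNReal.ofReal_zero, zero_mul, mul_zero]

lemma gammaProductPDFReal_of_pos (hr : 0 < r) (hs : 0 < s) (hg : 0 < g) :
    gammaProductPDFReal a b r s g =
      r ^ a * s ^ b / (Gamma a * Gamma b) * g ^ (b - 1) *
        (2 * (s * g / r) ^ ((a - b) / 2) * besselKReal (a - b) (2 * √(r * (s * g)))) := by
  have hr_pow : r ^ ((a + b) / 2) = r ^ a / r ^ ((a - b) / 2) := by
    rw [← rpow_sub hr]
    ring_nf
  have hs_pow : s ^ ((a + b) / 2) = s ^ b * s ^ ((a - b) / 2) := by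
    rw [← rpow_add hs]
    ring_nf
  have hg_pow : g ^ ((a + b) / 2 - 1) = g ^ (b - 1) * g ^ ((a - b) / 2) := by
    rw [← rpow_add hg]
    ring_nf
  rw [gammaProductPDFReal, if_pos hg, mul_rpow hr.le hs.le, hr_pow, hs_pow, hg_pow,
    div_rpow (by positivity) hr.le, mul_rpow hs.le hg.le, mul_assoc r s g]
  ring

lemma lintegral_abs_inv_mul_gammaPDF_gammaMeasure_of_pos (ha : 0 < a) (hb : 0 < b)
    (hr : 0 < r) (hs : 0 < s) (hg : 0 < g) :
    ∫⁻ t, ENNReal.ofReal |t⁻¹| * gammaPDF b s (t⁻¹ * g) ∂gammaMeasure a r =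
      ENNReal.ofReal (gammaProductPDFReal a b r s g) := by
  have support_subset : Function.support (gammaPDF a r * fun t ↦
      ENNReal.ofReal |t⁻¹| * gammaPDF b s (t⁻¹ * g)) ⊆ Ioi 0 :=
    fun t ht ↦ not_le.1 fun ht' ↦ ht (gammaPDF_mul_abs_inv_mul_gammaPDF_of_nonpos ht')
  have hsg := mul_pos hs hg
  have : 0 < Gamma a := Gamma_pos_of_pos ha
  have : 0 < Gamma b := Gamma_pos_of_pos hb
  rw [gammaMeasure, lintegral_withDensity_eq_lintegral_mul _ (by fun_prop) (by fun_prop),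
    ← setLIntegral_eq_of_support_subset support_subset,
    setLIntegral_congr_fun measurableSet_Ioi fun t ht ↦ (Pi.mul_apply _ _ t).trans
      (gammaPDF_mul_abs_inv_mul_gammaPDF_of_pos ha hr hg ht),
    ← ofReal_integral_eq_lintegral_ofReal
      ((integrableOn_rpow_mul_exp_neg_mul_add_div hr hsg (a - b)).const_mul _)
      (ae_restrict_of_forall_mem measurableSet_Ioi fun t (ht : 0 < t) ↦ by positivity),
    integral_const_mul, integral_rpow_mul_exp_neg_mul_add_div hr hsg,
    gammaProductPDFReal_of_pos hr hs hg]

lemma lintegral_abs_inv_mul_gammaPDF_gammaMeasure_of_neg (hg : g < 0) :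
    ∫⁻ t, ENNReal.ofReal |t⁻¹| * gammaPDF b s (t⁻¹ * g) ∂gammaMeasure a r = 0 := by
  rw [gammaMeasure, lintegral_withDensity_eq_lintegral_mul _ (by fun_prop) (by fun_prop)]
  refine lintegral_eq_zero_of_ae_eq_zero (ae_of_all _ fun t ↦ ?_)
  rcases le_or_gt t 0 with ht | ht
  · exact gammaPDF_mul_abs_inv_mul_gammaPDF_of_nonpos ht
  · simp only [Pi.mul_apply, Pi.zero_apply, mul_zero,
      gammaPDF_of_neg (mul_neg_of_pos_of_neg (inv_pos.2 ht) hg)]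

lemma lintegral_abs_inv_mul_gammaPDF_gammaMeasure (ha : 0 < a) (hb : 0 < b) (hr : 0 < r)
    (hs : 0 < s) (hg : g ≠ 0) :
    ∫⁻ t, ENNReal.ofReal |t⁻¹| * gammaPDF b s (t⁻¹ * g) ∂gammaMeasure a r =
      ENNReal.ofReal (gammaProductPDFReal a b r s g) := by
  rcases hg.lt_or_gt with hg | hg
  · rw [lintegral_abs_inv_mul_gammaPDF_gammaMeasure_of_neg hg, gammaProductPDFReal,
      if_neg hg.not_gt, ENNReal.ofReal_zero]
  · exact lintegral_abs_inv_mul_gammaPDF_gammaMeasure_of_pos ha hb hr hs hg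

lemma gammaMeasure_mconv_gammaMeasure (ha : 0 < a) (hb : 0 < b) (hr : 0 < r) (hs : 0 < s) :
    gammaMeasure a r ∗ₘ gammaMeasure b s =
      volume.withDensity fun g ↦ ENNReal.ofReal (gammaProductPDFReal a b r s g) := by
  have := isProbabilityMeasure_gammaMeasure ha hr
  have ne_zero : ∀ᵐ t : ℝ, t ≠ 0 := Measure.ae_ne volume 0
  have ne_zero_gamma : ∀ᵐ t ∂gammaMeasure a r, t ≠ 0 :=
    (withDensity_absolutelyContinuous _ _).ae_le ne_zero
  exact (mconv_withDensity_volume ne_zero_gamma (measurable_gammaPDF b s)).trans <|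
    withDensity_congr_ae <| ne_zero.mono fun _ hg ↦
      lintegral_abs_inv_mul_gammaPDF_gammaMeasure ha hb hr hs hg

theorem gamma_times_exp_K_density_general (ha : 0 < a) (hb : 0 < b) (hr : 0 < r) (hs : 0 < s)
    {Ω : Type*} [MeasurableSpace Ω] {P : Measure Ω} {X Y : Ω → ℝ}
    (hX : HasLaw X (gammaMeasure a r) P) (hY : HasLaw Y (gammaMeasure b s) P)
    (hXY : IndepFun X Y P) :
    HasLaw (fun ω ↦ X ω * Y ω)
      (volume.withDensity fun g ↦ ENNReal.ofReal (gammaProductPDFReal a b r s g)) P := by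
  have := isProbabilityMeasure_gammaMeasure ha hr
  have := isProbabilityMeasure_gammaMeasure hb hs
  exact gammaMeasure_mconv_gammaMeasure ha hb hr hs ▸ hXY.hasLaw_fun_mul hX hY

end GammaProduct

lemma gammaScaleMeasure_eq_gammaMeasure {m : ℕ} (hm : 1 ≤ m) (lam : ℝ) :
    gammaScaleMeasure m lam = gammaMeasure m lam⁻¹ := by
  obtain ⟨n, rfl⟩ := Nat.exists_eq_add_of_le' hm
  refine congrArg volume.withDensity (funext fun t ↦ ?_)
  rw [gammaPDF_eq, rpow_natCast, Nat.cast_add_one, Gamma_nat_eq_factorial, add_sub_cancel_right,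
    rpow_natCast, Nat.add_sub_cancel]
  ring_nf

lemma expDist_eq_gammaMeasure (r : ℝ) : expDist r = gammaMeasure 1 r := by
  refine congrArg volume.withDensity (funext fun t ↦ ?_)
  rw [gammaPDF_eq, rpow_one, Gamma_one, sub_self, rpow_zero, div_one, mul_one]

lemma gammaProductPDFReal_natCast_one {m : ℕ} (hm : 1 ≤ m) {lam : ℝ} (hlam : 0 ≤ lam) (g : ℝ) :
    gammaProductPDFReal m 1 lam⁻¹ 1 g =
      if 0 < g then
        2 / (Nat.factorial (m - 1) : ℝ) * lam ^ (-((m : ℝ) + 1) / 2) *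
          g ^ (((m : ℝ) - 1) / 2) * besselK (m - 1) (2 * √(g / lam))
      else 0 := by
  have hGamma : Gamma m = (m - 1).factorial := by
    rw [← Gamma_nat_eq_factorial, Nat.cast_pred hm, sub_add_cancel]
  have hg_exponent : ((m : ℝ) + 1) / 2 - 1 = (m - 1) / 2 := by ring
  rw [gammaProductPDFReal, hGamma, Gamma_one, mul_one, mul_one, inv_rpow hlam, ← rpow_neg hlam,
    ← neg_div, hg_exponent, ← Nat.cast_pred hm, besselKReal_natCast, inv_mul_eq_div,
    mul_div_right_comm]

/-- Equal-eigenvalue (fully correlated) case: if `T ∼ Gamma(m, λ)` and `E ∼ Exp(1)` are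
independent, then `T·E` has the classical K-distribution density with shape `m` and scale `λ`:
`g ↦ (2/(m−1)!)·λ^{−(m+1)/2}·g^{(m−1)/2}·K(m−1, 2·√(g/λ))` for `g > 0`. -/
theorem gamma_times_exp_K_density (m : ℕ) (hm : 1 ≤ m) (lam : ℝ) (hlam : 0 < lam)
    {Ω : Type*} [MeasurableSpace Ω] (P : Measure Ω) [IsProbabilityMeasure P]
    (T E : Ω → ℝ) (hTmeas : Measurable T) (hEmeas : Measurable E)
    (hindep : IndepFun T E P)
    (hTlaw : Measure.map T P = gammaScaleMeasure m lam)
    (hElaw : Measure.map E P = expDist 1) :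
    Measure.map (fun ω => T ω * E ω) P =
      volume.withDensity fun g =>
        ENNReal.ofReal (if 0 < g then
          2 / (Nat.factorial (m - 1) : ℝ) * lam ^ (-((m : ℝ) + 1) / 2) *
            g ^ (((m : ℝ) - 1) / 2) * besselK (m - 1) (2 * Real.sqrt (g / lam))
          else 0) := by
  have hT : HasLaw T (gammaMeasure m lam⁻¹) P :=
    ⟨hTmeas.aemeasurable, hTlaw.trans (gammaScaleMeasure_eq_gammaMeasure hm lam)⟩
  have hE : HasLaw E (gammaMeasure 1 1) P :=
    ⟨hEmeas.aemeasurable, hElaw.trans (expDist_eq_gammaMeasure 1)⟩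
  have hTE := (gamma_times_exp_K_density_general (by positivity) one_pos (inv_pos.2 hlam) one_pos
    hT hE hindep).map_eq
  simpa only [gammaProductPDFReal_natCast_one hm hlam.le] using hTE
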